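/- arXiv:1510.02643 — 2 statements merged into one kernel-verified Lean document; each statement's English description precedes it below -/
import Mathlib

section
/- Let G1 and G2 be connected graphs on the same edge set with L(G1) = L(G2), such that L(G1) has at least two circuits. If the graph co(G1), obtained from G1 by contracting all cut-edges and contracting all but one edge of each series class, has at least 5 vertices, then G1 and G2 are 2-isomorphic. -/
/-!
An edge set contains two cycles if and only if its cycle space over the two-element field has
dimension at least two. Hence the dual of `L(G)` is the truncation of the cographic matroid of `G`,
and `L(G)` determines the dimension `r` of the cycle space of `G` as well as every edge cut with
fewer than `r` edges.

Let `co(G₁)` have `n ≥ 5` vertices and `m` edges. It has no cut-edges and no series pairs, so every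
vertex star has at least three non-loop edges. For two vertices `v` and `w` whose stars have sizes
`s w ≤ s v`, counting degrees gives `2 * s w ≤ s v + s w ≤ 2 * m - 3 * (n - 2)`, and since
`m - n + 1 ≤ r` this forces `s w < r` for `n ≥ 5`. So every star except possibly a largest one is an
edge cut of `G₂` too, and the largest star is the sum of the others. The contracted edges are
recovered from cuts with at most two edges. Hence the cycle space of `G₂` is contained in that of
`G₁`, and the two have the same dimension.
-/

open Finset

/-- A multigraph with vertex type `V`, edge-label type `α`, edge set `E`,
and an endpoints function assigning to each edge an unordered pair of vertices. -/
structure MGraph (V : Type) (α : Type) where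
  E : Finset α
  ends : α → Sym2 V

namespace MGraph

variable {V V₁ V₂ : Type} {α : Type} [DecidableEq V] [DecidableEq V₁] [DecidableEq V₂]
  [DecidableEq α]

/-- `u` and `v` are joined by an edge of `X`. -/
def Adj (G : MGraph V α) (X : Finset α) (u v : V) : Prop :=
  ∃ e ∈ X, G.ends e = s(u, v)

/-- `v` is incident with an edge of `X`. -/
def VIn (G : MGraph V α) (X : Finset α) (v : V) : Prop :=
  ∃ e ∈ X, v ∈ G.ends e

/-- The degree of `v` in the edge set `X` (loops count twice). -/
def degIn (G : MGraph V α) (X : Finset α) (v : V) : ℕ :=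
  ∑ e ∈ X, (if G.ends e = s(v, v) then 2 else if v ∈ G.ends e then 1 else 0)

/-- `C` is the edge set of a cycle of `G`: a nonempty connected 2-regular subgraph. -/
def IsCycle (G : MGraph V α) (C : Finset α) : Prop :=
  C.Nonempty ∧ C ⊆ G.E ∧ (∀ v, G.VIn C v → G.degIn C v = 2) ∧
    ∀ u v, G.VIn C u → G.VIn C v → Relation.ReflTransGen (G.Adj C) u v

/-- The subgraph on edge set `X` contains at least two (distinct) cycles. -/
def TwoCycles (G : MGraph V α) (X : Finset α) : Prop :=
  ∃ C₁ C₂ : Finset α, G.IsCycle C₁ ∧ G.IsCycle C₂ ∧ C₁ ⊆ X ∧ C₂ ⊆ X ∧ C₁ ≠ C₂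

/-- `X` is a circuit of the bicircular lift matroid `L(G)`: a minimal edge set
containing at least two cycles. -/
def LiftCircuit (G : MGraph V α) (X : Finset α) : Prop :=
  X ⊆ G.E ∧ G.TwoCycles X ∧ ∀ Y ⊂ X, ¬ G.TwoCycles Y

/-- `X` is independent in the bicircular lift matroid `L(G)`. -/
def LiftIndep (G : MGraph V α) (X : Finset α) : Prop :=
  X ⊆ G.E ∧ ∀ C ⊆ X, ¬ G.LiftCircuit C

/-- `L(G)` has at least two circuits. -/
def TwoLiftCircuits (G : MGraph V α) : Prop :=
  ∃ X Y : Finset α, G.LiftCircuit X ∧ G.LiftCircuit Y ∧ X ≠ Y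

/-- Equality of the bicircular lift matroids `L(G₁) = L(G₂)` (equal ground sets
and equal circuit collections). -/
def LiftEq (G₁ : MGraph V₁ α) (G₂ : MGraph V₂ α) : Prop :=
  G₁.E = G₂.E ∧ ∀ X : Finset α, G₁.LiftCircuit X ↔ G₂.LiftCircuit X

/-- `G₁` and `G₂` are 2-isomorphic, i.e. their graphic matroids on the common
edge set are equal (equivalently, they have the same cycles). -/
def TwoIso (G₁ : MGraph V₁ α) (G₂ : MGraph V₂ α) : Prop :=
  G₁.E = G₂.E ∧ ∀ X : Finset α, G₁.IsCycle X ↔ G₂.IsCycle X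

/-- `G` has no loops. -/
def Loopless (G : MGraph V α) : Prop := ∀ e ∈ G.E, ¬ (G.ends e).IsDiag

/-- `G` is connected. -/
def Connected (G : MGraph V α) : Prop :=
  ∀ u v : V, Relation.ReflTransGen (G.Adj G.E) u v

/-- `G` is 2-edge-connected: every edge lies in a cycle. -/
def TwoEdgeConnected (G : MGraph V α) : Prop :=
  ∀ e ∈ G.E, ∃ C : Finset α, G.IsCycle C ∧ e ∈ C

/-- `e` is a cut-edge of `G`: an edge contained in no cycle. -/
def IsCutEdge (G : MGraph V α) (e : α) : Prop :=
  e ∈ G.E ∧ ∀ C : Finset α, G.IsCycle C → e ∉ C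

/-- Deletion of the edge `e` from `G`. -/
def delete (G : MGraph V α) (e : α) : MGraph V α :=
  ⟨G.E.erase e, G.ends⟩

/-- Restriction of `G` to the edge set `X`. -/
def restrict (G : MGraph V α) (X : Finset α) : MGraph V α :=
  ⟨G.E ∩ X, G.ends⟩

/-- Contraction of the link `e` with endpoints `u, v`: the edge `e` is deleted
and the vertex `v` is identified with `u`. -/
def contractLink (G : MGraph V α) (e : α) (u v : V) : MGraph V α :=
  ⟨G.E.erase e, fun f => (G.ends f).map (fun w => if w = v then u else w)⟩

/-- `X` is a circuit of the contraction `M/e`, where `M` is the matroid with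
circuit collection `Circ`: the circuits of `M/e` are the minimal nonempty sets of
the form `C \ {e}` with `C` a circuit of `M`. -/
def ContractCircuit (Circ : Finset α → Prop) (e : α) (X : Finset α) : Prop :=
  (X.Nonempty ∧ ∃ C : Finset α, Circ C ∧ X = C.erase e) ∧
    ∀ Y ⊂ X, ¬ (Y.Nonempty ∧ ∃ C : Finset α, Circ C ∧ Y = C.erase e)

/-- `e` and `f` form a series pair: no cycle contains exactly one of them. -/
def SeriesPair (G : MGraph V α) (e f : α) : Prop :=
  e ∈ G.E ∧ f ∈ G.E ∧ ∀ C : Finset α, G.IsCycle C → (e ∈ C ↔ f ∈ C)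

/-- `X` is a series class of `G`: a maximal set of pairwise series edges. -/
def SeriesClass (G : MGraph V α) (X : Finset α) : Prop :=
  X ⊆ G.E ∧ X.Nonempty ∧ (∀ e ∈ X, ∀ f ∈ X, G.SeriesPair e f) ∧
    ∀ g ∈ G.E, (∀ e ∈ X, G.SeriesPair e g) → g ∈ X

/-- `G` is cosimple: no cut-edges and no nontrivial series classes. -/
def CoSimple (G : MGraph V α) : Prop :=
  (∀ e ∈ G.E, ¬ G.IsCutEdge e) ∧
    ∀ e ∈ G.E, ∀ f ∈ G.E, e ≠ f → ¬ G.SeriesPair e f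

/-- `e` and `f` are parallel edges. -/
def Parallel (G : MGraph V α) (e f : α) : Prop :=
  e ≠ f ∧ G.IsCycle {e, f}

/-- `P` is a parallel class of `G`: a maximal set of pairwise parallel non-loop
edges. -/
def ParallelClass (G : MGraph V α) (P : Finset α) : Prop :=
  P ⊆ G.E ∧ P.Nonempty ∧ (∀ e ∈ P, ¬ (G.ends e).IsDiag) ∧
    (∀ e ∈ P, ∀ f ∈ P, e ≠ f → G.Parallel e f) ∧
    ∀ g ∈ G.E, g ∉ P → ¬ (G.ends g).IsDiag → ∃ e ∈ P, ¬ G.Parallel e g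

/-- `P` is the edge set of a path of `G`: nonempty, acyclic, connected, with all
degrees at most two. -/
def IsPath (G : MGraph V α) (P : Finset α) : Prop :=
  P.Nonempty ∧ P ⊆ G.E ∧ (∀ C ⊆ P, ¬ G.IsCycle C) ∧
    (∀ v, G.VIn P v → G.degIn P v ≤ 2) ∧
    ∀ u v, G.VIn P u → G.VIn P v → Relation.ReflTransGen (G.Adj P) u v

/-- `P` is the edge set of a path of `G` with end-vertices `x` and `y`. -/
def PathBetween (G : MGraph V α) (P : Finset α) (x y : V) : Prop :=
  G.IsPath P ∧ x ≠ y ∧ G.degIn P x = 1 ∧ G.degIn P y = 1 ∧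
    ∀ v, G.degIn P v = 1 → v = x ∨ v = y

/-- `P` is the edge set of an ear of `G`: a path contained in a cycle, whose
internal vertices have degree two in `G` and whose end-vertices have degree at
least three in `G`. -/
def IsEar (G : MGraph V α) (P : Finset α) : Prop :=
  G.IsPath P ∧ (∀ v, G.degIn P v = 2 → G.degIn G.E v = 2) ∧
    (∀ v, G.degIn P v = 1 → 3 ≤ G.degIn G.E v) ∧
    ∃ C : Finset α, G.IsCycle C ∧ P ⊆ C

/-- `G` is a subdivision of `K_2^n`: two distinct branch vertices joined by `n`
internally disjoint paths whose edge sets partition `E(G)`. -/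
def IsK2nSub (G : MGraph V α) (n : ℕ) : Prop :=
  ∃ x y : V, x ≠ y ∧ ∃ P : Fin n → Finset α,
    (G.E = Finset.univ.biUnion fun i => P i) ∧
    (∀ i j : Fin n, i ≠ j → Disjoint (P i) (P j)) ∧
    (∀ i : Fin n, G.PathBetween (P i) x y) ∧
    (∀ i j : Fin n, i ≠ j → ∀ v, G.VIn (P i) v → G.VIn (P j) v → v = x ∨ v = y)

/-- `G` is a subdivision of `K_2^n` with the edge `e` lying on one of the `n`
paths. -/
def IsK2nSubThrough (G : MGraph V α) (n : ℕ) (e : α) : Prop :=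
  ∃ x y : V, x ≠ y ∧ ∃ P : Fin n → Finset α,
    (G.E = Finset.univ.biUnion fun i => P i) ∧
    (∀ i j : Fin n, i ≠ j → Disjoint (P i) (P j)) ∧
    (∀ i : Fin n, G.PathBetween (P i) x y) ∧
    (∀ i j : Fin n, i ≠ j → ∀ v, G.VIn (P i) v → G.VIn (P j) v → v = x ∨ v = y) ∧
    ∃ i : Fin n, e ∈ P i

/-- `T` is the edge set of a spanning tree of `G`. -/
def IsSpanningTree (G : MGraph V α) (T : Finset α) : Prop :=
  T ⊆ G.E ∧ (∀ C ⊆ T, ¬ G.IsCycle C) ∧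
    ∀ u v : V, Relation.ReflTransGen (G.Adj T) u v

end MGraph

/-- `D` is a valid set of edges to contract in forming `co(G)`: it contains all
cut-edges and all but exactly one edge of each series class containing a
non-cut-edge. The quotient of the vertex set by the edges of `D` gives the
vertex set of `co(G)`. -/
def MGraph.IsCoContractSet {V α : Type} [DecidableEq V] [DecidableEq α]
    (G : MGraph V α) (D : Finset α) : Prop :=
  D ⊆ G.E ∧ (∀ e : α, G.IsCutEdge e → e ∈ D) ∧
    ∀ X : Finset α, G.SeriesClass X → (∃ e ∈ X, ¬ G.IsCutEdge e) → (X \ D).card = 1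

section VectorConfigurations

variable {F M M₁ M₂ α : Type*} [DivisionRing F]
  [AddCommGroup M] [Module F M] [AddCommGroup M₁] [Module F M₁] [AddCommGroup M₂] [Module F M₂]

/-- The vectors `v e` with `e ∈ J` span a subspace of codimension at most one. In matroid terms,
`J` is spanning in the truncation of the matroid represented by `v`. -/
def SpansHyperplane (F : Type*) {M α : Type*} [DivisionRing F] [AddCommGroup M] [Module F M]
    (v : α → M) (J : Finset α) : Prop :=
  Module.finrank F M ≤ Module.finrank F (Submodule.span F (v '' J)) + 1

lemma finrank_span_image_finset_le_card (v : α → M) (J : Finset α) :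
    Module.finrank F (Submodule.span F (v '' J)) ≤ #J := by
  classical
  rw [← coe_image]
  exact (finrank_span_finset_le_card _).trans card_image_le

lemma linearIndepOn_finset_iff_card_le_finrank_span {v : α → M} {J : Finset α} :
    LinearIndepOn F v (J : Set α) ↔ #J ≤ Module.finrank F (Submodule.span F (v '' J)) := by
  rw [LinearIndepOn, linearIndependent_iff_card_le_finrank_span, Set.finrank,
    ← Set.image_eq_range]
  simp only [coe_sort_coe, Fintype.card_coe]

lemma exists_linearIndepOn_superset_card_add_one_eq_finrank [FiniteDimensional F M]
    {v : α → M} (hv : Submodule.span F (Set.range v) = ⊤) {J : Finset α}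
    (hJ : LinearIndepOn F v (J : Set α)) (hcard : #J < Module.finrank F M) :
    ∃ J' : Finset α, J ⊆ J' ∧ LinearIndepOn F v (J' : Set α) ∧ #J' + 1 = Module.finrank F M := by
  obtain ⟨B, -, hJB, hspan, hB⟩ := exists_linearIndepOn_extension hJ (Set.subset_univ _)
  lift B to Finset α using Set.finite_coe_iff.1 (LinearIndependent.finite hB)
  have hBcard : Module.finrank F M ≤ #B := by
    rw [Set.image_univ, ← Submodule.span_le, hv, top_le_iff] at hspan
    rw [← finrank_top F M, ← hspan]
    exact finrank_span_image_finset_le_card v B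
  obtain ⟨J', hJJ', hJ'B, hJ'⟩ := exists_subsuperset_card_eq (coe_subset.1 hJB)
    (n := Module.finrank F M - 1) (by omega) (by omega)
  exact ⟨J', hJJ', hB.mono (coe_subset.2 hJ'B), by omega⟩

lemma finrank_le_of_spansHyperplane [FiniteDimensional F M₁] {v₁ : α → M₁} {v₂ : α → M₂}
    (hv₁ : Submodule.span F (Set.range v₁) = ⊤)
    (h : ∀ J, SpansHyperplane F v₁ J → SpansHyperplane F v₂ J) (hM₂ : 1 < Module.finrank F M₂) :
    Module.finrank F M₂ ≤ Module.finrank F M₁ := by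
  by_contra! hlt
  obtain ⟨J, hJ, hJM₂⟩ : ∃ J, SpansHyperplane F v₁ J ∧ #J + 1 < Module.finrank F M₂ := by
    rcases (Module.finrank F M₁).eq_zero_or_pos with h₀ | hpos
    · exact ⟨∅, by simp [SpansHyperplane, h₀], by simpa using hM₂⟩
    · obtain ⟨J, -, hJ, hcard⟩ := exists_linearIndepOn_superset_card_add_one_eq_finrank hv₁
        (J := ∅) (by simp) (by simpa using hpos)
      have := linearIndepOn_finset_iff_card_le_finrank_span.1 hJ
      exact ⟨J, by unfold SpansHyperplane; omega, by omega⟩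
  have hle : _ ≤ _ := h J hJ
  have := finrank_span_image_finset_le_card (F := F) v₂ J
  omega

lemma linearIndepOn_of_spansHyperplane_iff [FiniteDimensional F M₁] [FiniteDimensional F M₂]
    {v₁ : α → M₁} {v₂ : α → M₂} (hv₁ : Submodule.span F (Set.range v₁) = ⊤)
    (hv₂ : Submodule.span F (Set.range v₂) = ⊤)
    (h : ∀ J, SpansHyperplane F v₁ J ↔ SpansHyperplane F v₂ J) (hM₁ : 1 < Module.finrank F M₁)
    {J : Finset α} (hJ : LinearIndepOn F v₁ (J : Set α)) (hcard : #J < Module.finrank F M₁) :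
    LinearIndepOn F v₂ (J : Set α) := by
  obtain ⟨J', hJJ', hJ', hJ'card⟩ :=
    exists_linearIndepOn_superset_card_add_one_eq_finrank hv₁ hJ hcard
  have hle : Module.finrank F M₁ ≤ Module.finrank F M₂ :=
    finrank_le_of_spansHyperplane hv₂ (fun J => (h J).2) hM₁
  have hspan₁ : SpansHyperplane F v₁ J' := by
    have := linearIndepOn_finset_iff_card_le_finrank_span.1 hJ'
    unfold SpansHyperplane
    omega
  have hspan₂ : Module.finrank F M₂ ≤ _ := (h J').1 hspan₁
  refine LinearIndepOn.mono ?_ (coe_subset.2 hJJ')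
  exact linearIndepOn_finset_iff_card_le_finrank_span.2 (by omega)

end VectorConfigurations

section BinaryConfigurations

variable {α M M₁ M₂ : Type*} [AddCommGroup M] [Module (ZMod 2) M] [AddCommGroup M₁]
  [Module (ZMod 2) M₁] [AddCommGroup M₂] [Module (ZMod 2) M₂] {v₁ : α → M₁} {v₂ : α → M₂}

lemma not_linearIndepOn_of_sum_eq_zero {v : α → M} {K : Finset α} (hK : ∑ e ∈ K, v e = 0)
    (hne : K.Nonempty) : ¬ LinearIndepOn (ZMod 2) v (K : Set α) := fun h => by
  obtain ⟨i, hi⟩ := hne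
  exact one_ne_zero (linearIndepOn_finset_iff.1 h (fun _ => 1) (by simpa using hK) i hi)

lemma exists_subset_sum_eq_zero {v : α → M} {J : Finset α}
    (hJ : ¬ LinearIndepOn (ZMod 2) v (J : Set α)) :
    ∃ K ⊆ J, K.Nonempty ∧ ∑ e ∈ K, v e = 0 := by
  rw [linearIndepOn_finset_iff] at hJ
  push Not at hJ
  obtain ⟨f, hf, i, hi, hfi⟩ := hJ
  refine ⟨{e ∈ J | f e ≠ 0}, filter_subset _ _, ⟨i, mem_filter.2 ⟨hi, hfi⟩⟩, ?_⟩
  refine (sum_filter _ _).trans (Eq.trans (sum_congr rfl fun e _ => ?_) hf)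
  have hcoeff : ∀ c : ZMod 2, c = 0 ∨ c = 1 := by decide
  rcases hcoeff (f e) with h | h <;> simp [h]

lemma sum_eq_zero_of_minimal {L : Finset α}
    (hL : Minimal (fun L => L.Nonempty ∧ ∑ e ∈ L, v₁ e = 0) L)
    (h : ∀ K ⊆ L, LinearIndepOn (ZMod 2) v₁ (K : Set α) ↔
      LinearIndepOn (ZMod 2) v₂ (K : Set α)) : ∑ e ∈ L, v₂ e = 0 := by
  obtain ⟨K, hKL, hKne, hK⟩ := exists_subset_sum_eq_zero
    (mt (h L subset_rfl).2 (not_linearIndepOn_of_sum_eq_zero hL.prop.2 hL.prop.1))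
  obtain ⟨K', hK'K, hK'⟩ := exists_subset_sum_eq_zero
    (mt (h K hKL).1 (not_linearIndepOn_of_sum_eq_zero hK hKne))
  have hLK : L ⊆ K := (hL.le_of_le hK' (hK'K.trans hKL)).trans hK'K
  rwa [hLK.antisymm hKL]

lemma sum_eq_zero_of_spansHyperplane_iff [FiniteDimensional (ZMod 2) M₁]
    [FiniteDimensional (ZMod 2) M₂] (hv₁ : Submodule.span (ZMod 2) (Set.range v₁) = ⊤)
    (hv₂ : Submodule.span (ZMod 2) (Set.range v₂) = ⊤)
    (h : ∀ J, SpansHyperplane (ZMod 2) v₁ J ↔ SpansHyperplane (ZMod 2) v₂ J)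
    (hr : Module.finrank (ZMod 2) M₁ = Module.finrank (ZMod 2) M₂)
    (hr1 : 1 < Module.finrank (ZMod 2) M₁) {K : Finset α} (hK : ∑ e ∈ K, v₁ e = 0)
    (hcard : #K < Module.finrank (ZMod 2) M₁) : ∑ e ∈ K, v₂ e = 0 := by
  classical
  induction K using Finset.strongInduction with
  | H K ih =>
    rcases K.eq_empty_or_nonempty with rfl | hne
    · exact sum_empty
    obtain ⟨L, hLK, hL⟩ := exists_minimal_le_of_wellFoundedLT
      (fun L : Finset α => L.Nonempty ∧ ∑ e ∈ L, v₁ e = 0) K ⟨hne, hK⟩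
    have hL₂ : ∑ e ∈ L, v₂ e = 0 := sum_eq_zero_of_minimal hL fun J hJ =>
      have hJcard := (card_le_card (hJ.trans hLK)).trans_lt hcard
      ⟨fun hJ₁ => linearIndepOn_of_spansHyperplane_iff hv₁ hv₂ h hr1 hJ₁ hJcard,
        fun hJ₂ => linearIndepOn_of_spansHyperplane_iff hv₂ hv₁ (fun J => (h J).symm)
          (hr ▸ hr1) hJ₂ (hr ▸ hJcard)⟩
    have hlt : K \ L ⊂ K := sdiff_ssubset hLK hL.prop.1
    have hrest : ∑ e ∈ K \ L, v₁ e = 0 := by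
      rwa [← sum_sdiff hLK, hL.prop.2, add_zero] at hK
    rw [← sum_sdiff hLK, hL₂, add_zero]
    exact ih _ hlt hrest ((card_lt_card hlt).trans hcard)

end BinaryConfigurations

section SeparatingFunctionals

variable {F M α : Type*} [Field F] [AddCommGroup M] [Module F M] [FiniteDimensional F M]
  {φ : α → Module.Dual F M}

lemma span_range_eq_top_of_separating (hφ : ∀ x, (∀ e, φ e x = 0) → x = 0) :
    Submodule.span F (Set.range φ) = ⊤ := by
  have hbot : (Submodule.span F (Set.range φ)).dualCoannihilator = ⊥ := by
    rw [eq_bot_iff]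
    intro x hx
    rw [← SetLike.mem_coe, Submodule.coe_dualCoannihilator_span] at hx
    exact hφ x fun e => hx _ ⟨e, rfl⟩
  refine Submodule.eq_top_of_finrank_eq ?_
  rw [Subspace.dual_finrank_eq, ← Subspace.finrank_add_finrank_dualCoannihilator_eq
    (Submodule.span F (Set.range φ)), hbot, finrank_bot, add_zero]

lemma spansHyperplane_iff_finrank_iInf_ker_le_one {J : Finset α} :
    SpansHyperplane F φ J ↔
      Module.finrank F ↥(⨅ e ∈ J, LinearMap.ker (φ e)) ≤ 1 := by
  have hker : (Submodule.span F (φ '' J)).dualCoannihilator = ⨅ e ∈ J, LinearMap.ker (φ e) := by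
    ext x
    rw [← SetLike.mem_coe, Submodule.coe_dualCoannihilator_span]
    simp
  have hrank := Subspace.finrank_add_finrank_dualCoannihilator_eq (Submodule.span F (φ '' J))
  rw [hker] at hrank
  rw [SpansHyperplane, Subspace.dual_finrank_eq]
  omega

end SeparatingFunctionals

section Cocycles

variable {α : Type*} {Z Z₁ Z₂ : Submodule (ZMod 2) (α →₀ ZMod 2)} {J K : Finset α}

/-- `K` is a cocycle of the binary space `Z`, that is, its characteristic vector is orthogonal to
`Z`. For the cycle space of a graph, these are the edge cuts. -/
def IsCocycle (Z : Submodule (ZMod 2) (α →₀ ZMod 2)) (K : Finset α) : Prop :=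
  ∀ z ∈ Z, ∑ e ∈ K, z e = 0

/-- The restriction to `Z` of the coordinate functional at `e`. These functionals represent the
matroid whose circuits are the minimal nonempty cocycles of `Z`. -/
noncomputable def coordFunctional (Z : Submodule (ZMod 2) (α →₀ ZMod 2)) (e : α) :
    Module.Dual (ZMod 2) Z :=
  Finsupp.lapply e ∘ₗ Z.subtype

lemma isCocycle_iff_sum_coordFunctional_eq_zero :
    IsCocycle Z K ↔ ∑ e ∈ K, coordFunctional Z e = 0 := by
  rw [LinearMap.ext_iff]
  simp [IsCocycle, coordFunctional]

lemma finrank_iInf_ker_coordFunctional :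
    Module.finrank (ZMod 2) ↥(⨅ e ∈ J, LinearMap.ker (coordFunctional Z e)) =
      Module.finrank (ZMod 2) ↥(Z ⊓ Finsupp.supported (ZMod 2) (ZMod 2) (J : Set α)ᶜ) := by
  have hker : ⨅ e ∈ J, LinearMap.ker (coordFunctional Z e) =
      (Finsupp.supported (ZMod 2) (ZMod 2) (J : Set α)ᶜ).comap Z.subtype := by
    ext z
    rw [Submodule.mem_comap, Finsupp.mem_supported']
    simp [coordFunctional]
  rw [hker, ← Submodule.finrank_map_subtype_eq, Submodule.map_comap_subtype]

lemma spansHyperplane_coordFunctional_iff [FiniteDimensional (ZMod 2) Z] :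
    SpansHyperplane (ZMod 2) (coordFunctional Z) J ↔
      Module.finrank (ZMod 2) ↥(Z ⊓ Finsupp.supported (ZMod 2) (ZMod 2) (J : Set α)ᶜ) ≤ 1 := by
  rw [spansHyperplane_iff_finrank_iInf_ker_le_one, finrank_iInf_ker_coordFunctional]

lemma span_range_coordFunctional [FiniteDimensional (ZMod 2) Z] :
    Submodule.span (ZMod 2) (Set.range (coordFunctional Z)) = ⊤ :=
  span_range_eq_top_of_separating fun _ hz => Subtype.ext (Finsupp.ext hz)

variable [FiniteDimensional (ZMod 2) Z₁] [FiniteDimensional (ZMod 2) Z₂]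

lemma finrank_eq_of_spansHyperplane_coordFunctional_iff
    (h : ∀ J, SpansHyperplane (ZMod 2) (coordFunctional Z₁) J ↔
      SpansHyperplane (ZMod 2) (coordFunctional Z₂) J)
    (h₁ : 1 < Module.finrank (ZMod 2) Z₁) (h₂ : 1 < Module.finrank (ZMod 2) Z₂) :
    Module.finrank (ZMod 2) Z₁ = Module.finrank (ZMod 2) Z₂ := by
  rw [← Subspace.dual_finrank_eq (V := Z₁), ← Subspace.dual_finrank_eq (V := Z₂)] at *
  exact (finrank_le_of_spansHyperplane span_range_coordFunctional (fun J => (h J).2) h₁).antisymm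
    (finrank_le_of_spansHyperplane span_range_coordFunctional (fun J => (h J).1) h₂)

lemma IsCocycle.of_spansHyperplane_coordFunctional_iff
    (h : ∀ J, SpansHyperplane (ZMod 2) (coordFunctional Z₁) J ↔
      SpansHyperplane (ZMod 2) (coordFunctional Z₂) J)
    (hr : Module.finrank (ZMod 2) Z₁ = Module.finrank (ZMod 2) Z₂)
    (hr1 : 1 < Module.finrank (ZMod 2) Z₁) (hK : IsCocycle Z₁ K)
    (hcard : #K < Module.finrank (ZMod 2) Z₁) : IsCocycle Z₂ K := by
  rw [isCocycle_iff_sum_coordFunctional_eq_zero] at hK ⊢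
  rw [← Subspace.dual_finrank_eq (V := Z₁), ← Subspace.dual_finrank_eq (V := Z₂)] at *
  exact sum_eq_zero_of_spansHyperplane_iff span_range_coordFunctional span_range_coordFunctional
    h hr hr1 hK hcard

end Cocycles

section BinaryVectors

variable {α : Type*} {X Y : Finset α}

/-- The characteristic vector of the finite set `X` over the two-element field. -/
noncomputable def charVec (X : Finset α) : α →₀ ZMod 2 :=
  Finsupp.indicator X fun _ _ => 1

lemma charVec_apply [DecidableEq α] (e : α) : charVec X e = if e ∈ X then 1 else 0 := by
  rw [charVec, Finsupp.indicator_apply, dite_eq_ite]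

lemma support_charVec : (charVec X).support = X := by
  classical
  ext e
  simp [charVec_apply]

lemma apply_eq_one_of_mem_support {z : α →₀ ZMod 2} {e : α} (he : e ∈ z.support) : z e = 1 :=
  Fin.eq_one_of_ne_zero _ (Finsupp.mem_support_iff.1 he)

lemma charVec_support (z : α →₀ ZMod 2) : charVec z.support = z := by
  classical
  ext e
  by_cases he : e ∈ z.support
  · rw [charVec_apply, if_pos he, apply_eq_one_of_mem_support he]
  · rw [charVec_apply, if_neg he, Finsupp.notMem_support_iff.1 he]

lemma charVec_injective : Function.Injective (charVec (α := α)) := fun X Y h => by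
  rw [← support_charVec (X := X), h, support_charVec]

lemma charVec_sdiff_add [DecidableEq α] (h : Y ⊆ X) : charVec (X \ Y) + charVec Y = charVec X := by
  ext e
  by_cases he : e ∈ Y
  · simp [charVec_apply, he, h he]
  · simp [charVec_apply, he]

instance finiteDimensional_supported (X : Finset α) :
    FiniteDimensional (ZMod 2) (Finsupp.supported (ZMod 2) (ZMod 2) (X : Set α)) :=
  (Finsupp.supportedEquivFinsupp (R := ZMod 2) (M := ZMod 2) (X : Set α)).symm.finiteDimensional

lemma finrank_supported (X : Finset α) :
    Module.finrank (ZMod 2) (Finsupp.supported (ZMod 2) (ZMod 2) (X : Set α)) = #X := by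
  rw [(Finsupp.supportedEquivFinsupp (R := ZMod 2) (M := ZMod 2) (X : Set α)).finrank_eq,
    Module.finrank_finsupp_self]
  exact Fintype.card_coe X

end BinaryVectors

lemma finrank_map_add_finrank_inf_ker {F M N : Type*} [Field F] [AddCommGroup M] [Module F M]
    [AddCommGroup N] [Module F N] (f : M →ₗ[F] N) (p : Submodule F M) [FiniteDimensional F p] :
    Module.finrank F (p.map f) + Module.finrank F ↥(p ⊓ LinearMap.ker f) = Module.finrank F p := by
  rw [← LinearMap.finrank_range_add_finrank_ker (f.domRestrict p), LinearMap.range_domRestrict,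
    LinearMap.ker_domRestrict, ← Submodule.finrank_map_subtype_eq p, Submodule.map_comap_subtype]

section Boundary

variable {V W : Type*}

/-- The sum over the two-element field of the two ends of an edge. It vanishes on loops. -/
noncomputable def endSum : Sym2 V → V →₀ ZMod 2 :=
  Sym2.lift ⟨fun a b => Finsupp.single a 1 + Finsupp.single b 1, fun _ _ => add_comm _ _⟩

lemma endSum_mk (a b : V) : endSum s(a, b) = Finsupp.single a 1 + Finsupp.single b 1 := rfl

lemma endSum_map (f : V → W) (s : Sym2 V) : endSum (s.map f) = (endSum s).mapDomain f := by
  induction s with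
  | h a b => simp [endSum_mk, Finsupp.mapDomain_add]

lemma endSum_apply [DecidableEq V] (s : Sym2 V) (v : V) :
    endSum s v = if v ∈ s ∧ ¬ s.IsDiag then 1 else 0 := by
  induction s with
  | h a b =>
    rcases eq_or_ne a b with rfl | hab
    · simp [endSum_mk, ZModModule.add_self]
    · rw [endSum_mk, Finsupp.add_apply, Finsupp.single_apply, Finsupp.single_apply]
      simp only [Sym2.mem_iff, Sym2.mk_isDiag_iff]
      grind

lemma endSum_mem_supported {s : Sym2 V} {U : Set V} (h : ∀ v ∈ s, v ∈ U) :
    endSum s ∈ Finsupp.supported (ZMod 2) (ZMod 2) U := by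
  induction s with
  | h a b =>
    exact add_mem (Finsupp.single_mem_supported _ _ (h a (Sym2.mem_mk_left a b)))
      (Finsupp.single_mem_supported _ _ (h b (Sym2.mem_mk_right a b)))

lemma sum_endSum {s : Sym2 V} {U : Finset V} (h : ∀ v ∈ s, v ∈ U) :
    ∑ v ∈ U, endSum s v = 0 := by
  classical
  induction s with
  | h a b =>
    have ha : a ∈ U := h a (Sym2.mem_mk_left a b)
    have hb : b ∈ U := h b (Sym2.mem_mk_right a b)
    simp [endSum_mk, Finsupp.single_apply, sum_add_distrib, ha, hb, ZModModule.add_self]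

end Boundary

namespace MGraph

section CycleSpace

variable {V : Type} {α : Type} {G : MGraph V α} {X : Finset α}

/-- The boundary map of `G` over the two-element field, sending an edge to the sum of its ends. -/
noncomputable def boundary (G : MGraph V α) : (α →₀ ZMod 2) →ₗ[ZMod 2] V →₀ ZMod 2 :=
  Finsupp.linearCombination (ZMod 2) fun e => endSum (G.ends e)

lemma boundary_apply (z : α →₀ ZMod 2) (v : V) :
    G.boundary z v = ∑ e ∈ z.support, endSum (G.ends e) v := by
  rw [boundary, Finsupp.linearCombination_apply, Finsupp.sum, Finsupp.finsetSum_apply]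
  exact sum_congr rfl fun e he => by rw [apply_eq_one_of_mem_support he, one_smul]

lemma boundary_single (e : α) : G.boundary (Finsupp.single e 1) = endSum (G.ends e) := by
  simp [boundary]

lemma boundary_eq_zero_of_forall_ne {z : α →₀ ZMod 2} [Finite V] {v : V}
    (h : ∀ w ≠ v, G.boundary z w = 0) : G.boundary z = 0 := by
  cases nonempty_fintype V
  have hsum : ∑ w, G.boundary z w = 0 := by
    simp only [boundary_apply]
    rw [sum_comm]
    exact sum_eq_zero fun e _ => sum_endSum fun w _ => mem_univ w
  rw [sum_eq_single_of_mem v (mem_univ v) fun w _ hw => h w hw] at hsum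
  ext w
  rcases eq_or_ne w v with rfl | hw
  exacts [hsum, h w hw]

/-- The binary cycle space of the subgraph of `G` with edge set `X`. -/
noncomputable def cycleSpace (G : MGraph V α) (X : Finset α) : Submodule (ZMod 2) (α →₀ ZMod 2) :=
  Finsupp.supported (ZMod 2) (ZMod 2) (X : Set α) ⊓ LinearMap.ker G.boundary

instance : FiniteDimensional (ZMod 2) (G.cycleSpace X) :=
  Submodule.finiteDimensional_of_le inf_le_left

lemma mem_cycleSpace_iff {z : α →₀ ZMod 2} :
    z ∈ G.cycleSpace X ↔ z.support ⊆ X ∧ G.boundary z = 0 := by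
  rw [cycleSpace, Submodule.mem_inf, LinearMap.mem_ker, Finsupp.mem_supported, coe_subset]

lemma cycleSpace_inf_supported_compl [DecidableEq α] (J : Finset α) :
    G.cycleSpace X ⊓ Finsupp.supported (ZMod 2) (ZMod 2) (J : Set α)ᶜ = G.cycleSpace (X \ J) := by
  rw [cycleSpace, cycleSpace, inf_right_comm, coe_sdiff, Set.sdiff_eq, Finsupp.supported_inter]

end CycleSpace

section DimensionCount

variable {V : Type} {α : Type} {G : MGraph V α} {X : Finset α} {U : Finset V}

-- Every edge joins two vertices of `U`, so the coordinates of a boundary sum to zero over `U`.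
lemma map_boundary_lt_supported (hU : ∀ e ∈ X, ∀ v ∈ G.ends e, v ∈ U) (hne : U.Nonempty) :
    (Finsupp.supported (ZMod 2) (ZMod 2) (X : Set α)).map G.boundary <
      Finsupp.supported (ZMod 2) (ZMod 2) (U : Set V) := by
  classical
  rw [Finsupp.supported_eq_span_single, Submodule.map_span, ← Set.image_comp]
  refine lt_of_le_of_ne (Submodule.span_le.2 ?_) fun heq => ?_
  · rintro _ ⟨e, he, rfl⟩
    rw [Function.comp_apply, boundary_single]
    exact endSum_mem_supported (hU e he)
  · obtain ⟨u, hu⟩ := hne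
    have hle : Finsupp.supported (ZMod 2) (ZMod 2) (U : Set V) ≤
        LinearMap.ker (∑ v ∈ U, Finsupp.lapply (R := ZMod 2) (M := ZMod 2) v) := by
      rw [← heq, Submodule.span_le]
      rintro _ ⟨e, he, rfl⟩
      simpa [boundary_single] using sum_endSum (hU e he)
    simpa [Finsupp.single_apply, hu] using hle (Finsupp.single_mem_supported (ZMod 2) 1 hu)

lemma card_lt_card_add_finrank_cycleSpace (hU : ∀ e ∈ X, ∀ v ∈ G.ends e, v ∈ U)
    (hne : U.Nonempty) : #X < #U + Module.finrank (ZMod 2) (G.cycleSpace X) := by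
  have hrank := finrank_map_add_finrank_inf_ker G.boundary
    (Finsupp.supported (ZMod 2) (ZMod 2) (X : Set α))
  have hlt := Submodule.finrank_lt_finrank_of_lt (map_boundary_lt_supported hU hne)
  rw [finrank_supported] at hrank hlt
  rw [cycleSpace]
  omega

end DimensionCount

section EvenSets

variable {V : Type} {α : Type} [DecidableEq V] {G : MGraph V α} {X Y R C : Finset α} {v : V}

/-- `X` is an even set of `G`: every vertex has even degree in the subgraph with edge set `X`. -/
def EvenSet (G : MGraph V α) (X : Finset α) : Prop := ∀ v, Even (G.degIn X v)

lemma degIn_pos_iff : 0 < G.degIn X v ↔ G.VIn X v := by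
  rw [degIn, sum_pos_iff, VIn]
  refine exists_congr fun e => and_congr_right fun _ => ?_
  induction G.ends e with
  | h a b => split_ifs <;> simp_all

lemma not_vIn_iff : ¬ G.VIn X v ↔ G.degIn X v = 0 := by
  rw [← degIn_pos_iff, Nat.pos_iff_ne_zero, not_not]

lemma degIn_sdiff_add [DecidableEq α] (h : Y ⊆ X) (v : V) :
    G.degIn (X \ Y) v + G.degIn Y v = G.degIn X v :=
  sum_sdiff h

lemma EvenSet.sdiff [DecidableEq α] (hX : G.EvenSet X) (hY : G.EvenSet Y) (h : Y ⊆ X) :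
    G.EvenSet (X \ Y) := fun v => by
  have hv := hX v
  rw [← degIn_sdiff_add h, Nat.even_add] at hv
  exact hv.2 (hY v)

lemma EvenSet.two_le_degIn (hX : G.EvenSet X) (hv : G.VIn X v) : 2 ≤ G.degIn X v := by
  have hpos := degIn_pos_iff.2 hv
  obtain ⟨k, hk⟩ := hX v
  omega

lemma IsCycle.evenSet (h : G.IsCycle C) : G.EvenSet C := fun v => by
  by_cases hv : G.VIn C v
  · rw [h.2.2.1 v hv]
    exact even_two
  · rw [not_vIn_iff.1 hv]
    exact Even.zero

lemma sum_degIn {U : Finset V} (hU : ∀ e ∈ X, ∀ v ∈ G.ends e, v ∈ U) :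
    ∑ v ∈ U, G.degIn X v = 2 * #X := by
  simp only [degIn]
  rw [sum_comm, mul_comm, ← smul_eq_mul, ← sum_const]
  refine sum_congr rfl fun e he => ?_
  have hends := hU e he
  revert hends
  induction G.ends e with
  | h a b =>
    intro hends
    have hsplit : ∀ v, (if s(a, b) = s(v, v) then 2 else if v ∈ s(a, b) then 1 else 0) =
        (if a = v then 1 else 0) + if b = v then 1 else 0 := fun v => by
      simp only [Sym2.eq_iff, Sym2.mem_iff]
      grind
    rw [sum_congr rfl fun v _ => hsplit v, sum_add_distrib, sum_ite_eq, sum_ite_eq,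
      if_pos (hends a (Sym2.mem_mk_left a b)), if_pos (hends b (Sym2.mem_mk_right a b))]

lemma boundary_charVec_apply : G.boundary (charVec X) v = (G.degIn X v : ZMod 2) := by
  rw [boundary_apply, support_charVec, degIn, Nat.cast_sum]
  refine sum_congr rfl fun e _ => ?_
  rw [endSum_apply]
  induction G.ends e with
  | h a b => split_ifs <;> simp_all [CharTwo.two_eq_zero]

lemma charVec_mem_cycleSpace_iff : charVec X ∈ G.cycleSpace R ↔ X ⊆ R ∧ G.EvenSet X := by
  rw [mem_cycleSpace_iff, support_charVec, Finsupp.ext_iff]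
  simp only [boundary_charVec_apply, Finsupp.zero_apply, ZMod.natCast_eq_zero_iff_even, EvenSet]

lemma evenSet_support {z : α →₀ ZMod 2} (hz : z ∈ G.cycleSpace R) : G.EvenSet z.support := by
  rw [← charVec_support z] at hz
  exact (charVec_mem_cycleSpace_iff.1 hz).2

end EvenSets

section Cycles

variable {V : Type} {α : Type} {G : MGraph V α} {X C R : Finset α} {u v : V}

lemma vIn_of_reflTransGen (hclosed : ∀ w, G.VIn X w → ∀ e ∈ C, w ∈ G.ends e → e ∈ X)
    (hu : G.VIn X u) (h : Relation.ReflTransGen (G.Adj C) u v) : G.VIn X v := by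
  induction h with
  | refl => exact hu
  | @tail a b _ hab ih =>
    obtain ⟨e, he, hends⟩ := hab
    exact ⟨e, hclosed a ih e he (hends ▸ Sym2.mem_mk_left a b), hends ▸ Sym2.mem_mk_right a b⟩

variable [DecidableEq V]

lemma IsCycle.subset_of_evenSet (h : G.IsCycle C) (hX : G.EvenSet X) (hne : X.Nonempty)
    (hXC : X ⊆ C) : C ⊆ X := by
  classical
  obtain ⟨-, -, hdeg, hconn⟩ := h
  have hclosed : ∀ w, G.VIn X w → ∀ e ∈ C, w ∈ G.ends e → e ∈ X := fun w hw e he hwe => by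
    by_contra heX
    have hX2 := hX.two_le_degIn hw
    have hpos : 0 < G.degIn (C \ X) w := degIn_pos_iff.2 ⟨e, mem_sdiff.2 ⟨he, heX⟩, hwe⟩
    have hsum := degIn_sdiff_add (G := G) hXC w
    rw [hdeg w ⟨e, he, hwe⟩] at hsum
    omega
  obtain ⟨f, hf⟩ := hne
  intro e he
  have hu := (G.ends f).out_fst_mem
  have hv := (G.ends e).out_fst_mem
  exact hclosed _ (vIn_of_reflTransGen hclosed ⟨f, hf, hu⟩ (hconn _ _ ⟨f, hXC hf, hu⟩ ⟨e, he, hv⟩))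
    e he hv

-- The cycle space of a minimal even set is one-dimensional, so there are at least as many
-- vertices as edges, and the average degree is at most two.
lemma degIn_eq_two_of_minimal
    (h : Minimal (fun X : Finset α => X.Nonempty ∧ G.EvenSet X) C) (hv : G.VIn C v) :
    G.degIn C v = 2 := by
  let U : Finset V := C.biUnion fun e => (G.ends e).toFinset
  have hmemU : ∀ w, w ∈ U ↔ G.VIn C w := fun w => by simp [U, VIn]
  have hU : ∀ e ∈ C, ∀ w ∈ G.ends e, w ∈ U := fun e he w hw => (hmemU w).2 ⟨e, he, hw⟩
  have hspan : G.cycleSpace C ≤ Submodule.span (ZMod 2) {charVec C} := fun z hz => by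
    rcases z.support.eq_empty_or_nonempty with hz0 | hne
    · rw [Finsupp.support_eq_empty.1 hz0]
      exact zero_mem _
    · have hsub := (mem_cycleSpace_iff.1 hz).1
      rw [← charVec_support z, hsub.antisymm (h.le_of_le ⟨hne, evenSet_support hz⟩ hsub)]
      exact Submodule.mem_span_singleton_self _
  have hdim : Module.finrank (ZMod 2) (G.cycleSpace C) ≤ 1 :=
    (Submodule.finrank_mono hspan).trans ((finrank_span_le_card _).trans (by simp))
  have hcount := card_lt_card_add_finrank_cycleSpace hU ⟨v, (hmemU v).2 hv⟩
  have hge : ∀ w ∈ U, 2 ≤ G.degIn C w := fun w hw => h.prop.2.two_le_degIn ((hmemU w).1 hw)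
  have hsum : ∑ w ∈ U, 2 = ∑ w ∈ U, G.degIn C w := by
    refine (sum_le_sum hge).antisymm ?_
    rw [sum_degIn hU, sum_const, smul_eq_mul]
    omega
  exact ((sum_eq_sum_iff_of_le hge).1 hsum v ((hmemU v).2 hv)).symm

-- The edges of a connected component of an even set form an even set.
lemma reflTransGen_of_minimal (h : Minimal (fun X : Finset α => X.Nonempty ∧ G.EvenSet X) C)
    (hu : G.VIn C u) (hv : G.VIn C v) : Relation.ReflTransGen (G.Adj C) u v := by
  classical
  let X := {e ∈ C | ∃ w ∈ G.ends e, Relation.ReflTransGen (G.Adj C) u w}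
  have hXC : X ⊆ C := filter_subset _ _
  have hreach : ∀ w, G.VIn X w → Relation.ReflTransGen (G.Adj C) u w := by
    rintro w ⟨e, he, hwe⟩
    obtain ⟨heC, x, hx, hux⟩ := mem_filter.1 he
    rcases eq_or_ne x w with rfl | hxw
    · exact hux
    · exact hux.tail ⟨e, heC, (Sym2.mem_and_mem_iff hxw).1 ⟨hx, hwe⟩⟩
  have hX : G.EvenSet X := fun w => by
    by_cases hw : G.VIn X w
    · have hrest : G.degIn (C \ X) w = 0 := not_vIn_iff.1 fun ⟨e, he, hwe⟩ =>
        (mem_sdiff.1 he).2 (mem_filter.2 ⟨(mem_sdiff.1 he).1, w, hwe, hreach w hw⟩)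
      rw [← zero_add (G.degIn X w), ← hrest, degIn_sdiff_add hXC]
      exact h.prop.2 w
    · rw [not_vIn_iff.1 hw]
      exact Even.zero
  obtain ⟨e, he, hue⟩ := hu
  obtain ⟨f, hf, hvf⟩ := hv
  have hCX : C ⊆ X := h.le_of_le ⟨⟨e, mem_filter.2 ⟨he, u, hue, .refl⟩⟩, hX⟩ hXC
  exact hreach v ⟨f, hCX hf, hvf⟩

lemma isCycle_iff_minimal_evenSet :
    G.IsCycle C ↔ C ⊆ G.E ∧ Minimal (fun X : Finset α => X.Nonempty ∧ G.EvenSet X) C :=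
  ⟨fun h => ⟨h.2.1, ⟨h.1, h.evenSet⟩, fun _ hX hXC => h.subset_of_evenSet hX.2 hX.1 hXC⟩,
    fun h => ⟨h.2.prop.1, h.1, fun _ => degIn_eq_two_of_minimal h.2,
      fun _ _ => reflTransGen_of_minimal h.2⟩⟩

lemma EvenSet.exists_isCycle_subset (h : G.EvenSet X) (hX : X ⊆ G.E) (hne : X.Nonempty) :
    ∃ C ⊆ X, G.IsCycle C := by
  obtain ⟨C, hCX, hC⟩ := exists_minimal_le_of_wellFoundedLT
    (fun X : Finset α => X.Nonempty ∧ G.EvenSet X) X ⟨hne, h⟩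
  exact ⟨C, hCX, isCycle_iff_minimal_evenSet.2 ⟨hCX.trans hX, hC⟩⟩

lemma charVec_mem_of_isCycle_mem {S : Submodule (ZMod 2) (α →₀ ZMod 2)} (hR : R ⊆ G.E)
    (hS : ∀ C ⊆ R, G.IsCycle C → charVec C ∈ S) (hXR : X ⊆ R) (hX : G.EvenSet X) :
    charVec X ∈ S := by
  classical
  induction X using Finset.strongInduction with
  | H X ih =>
    rcases X.eq_empty_or_nonempty with rfl | hne
    · convert S.zero_mem
      exact Finsupp.support_eq_empty.1 support_charVec
    · obtain ⟨C, hCX, hC⟩ := hX.exists_isCycle_subset (hXR.trans hR) hne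
      rw [← charVec_sdiff_add hCX]
      exact S.add_mem (ih _ (sdiff_ssubset hCX hC.1) (sdiff_subset.trans hXR)
        (hX.sdiff hC.evenSet hCX)) (hS C (hCX.trans hXR) hC)

lemma cycleSpace_eq_span_isCycle (hR : R ⊆ G.E) :
    G.cycleSpace R = Submodule.span (ZMod 2) (charVec '' {C | C ⊆ R ∧ G.IsCycle C}) := by
  refine le_antisymm (fun z hz => ?_) (Submodule.span_le.2 ?_)
  · rw [← charVec_support z]
    exact charVec_mem_of_isCycle_mem hR
      (fun C hCR hC => Submodule.subset_span ⟨C, ⟨hCR, hC⟩, rfl⟩)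
      (mem_cycleSpace_iff.1 hz).1 (evenSet_support hz)
  · rintro _ ⟨C, ⟨hCR, hC⟩, rfl⟩
    exact charVec_mem_cycleSpace_iff.2 ⟨hCR, hC.evenSet⟩

lemma twoCycles_iff_one_lt_finrank (hR : R ⊆ G.E) :
    G.TwoCycles R ↔ 1 < Module.finrank (ZMod 2) (G.cycleSpace R) := by
  constructor
  · rintro ⟨C₁, C₂, hC₁, hC₂, hC₁R, hC₂R, hne⟩
    by_contra! hle
    obtain ⟨⟨u, _⟩, hu⟩ := finrank_le_one_iff.1 hle
    have hcycle : ∀ C ⊆ R, G.IsCycle C → charVec C = u := fun C hCR hC => by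
      obtain ⟨c, hc⟩ := hu ⟨charVec C, charVec_mem_cycleSpace_iff.2 ⟨hCR, hC.evenSet⟩⟩
      have hcu : c • u = charVec C := congrArg Subtype.val hc
      have hc1 : c = 1 := Fin.eq_one_of_ne_zero c fun hc0 : c = 0 => hC.1.ne_empty <| by
        rw [← support_charVec (X := C), ← hcu, hc0, zero_smul, Finsupp.support_zero]
      rw [← hcu, hc1, one_smul]
    exact hne (charVec_injective ((hcycle C₁ hC₁R hC₁).trans (hcycle C₂ hC₂R hC₂).symm))
  · intro hlt
    by_contra hno
    have hsub : {C | C ⊆ R ∧ G.IsCycle C}.Subsingleton := fun C₁ h₁ C₂ h₂ =>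
      by_contra fun hne => hno ⟨C₁, C₂, h₁.2, h₂.2, h₁.1, h₂.1, hne⟩
    rw [cycleSpace_eq_span_isCycle hR] at hlt
    rcases hsub.eq_empty_or_singleton with h0 | ⟨C, h1⟩
    · rw [h0, Set.image_empty, Submodule.span_empty, finrank_bot] at hlt
      exact absurd hlt (by simp)
    · rw [h1, Set.image_singleton] at hlt
      exact absurd hlt (not_lt.2 ((finrank_span_le_card _).trans (by simp)))

end Cycles

section LiftMatroid

variable {V₁ V₂ : Type} {α : Type} [DecidableEq V₁] [DecidableEq V₂] {G : MGraph V₁ α}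
  {H : MGraph V₂ α} {R : Finset α}

lemma twoCycles_iff_exists_liftCircuit (hR : R ⊆ G.E) :
    G.TwoCycles R ↔ ∃ X ⊆ R, G.LiftCircuit X := by
  constructor
  · intro h
    obtain ⟨X, hXR, hX⟩ := exists_minimal_le_of_wellFoundedLT G.TwoCycles R h
    exact ⟨X, hXR, hXR.trans hR, hX.prop, fun _ hY => hX.not_prop_of_lt hY⟩
  · rintro ⟨X, hXR, -, ⟨C₁, C₂, hC₁, hC₂, hC₁X, hC₂X, hne⟩, -⟩
    exact ⟨C₁, C₂, hC₁, hC₂, hC₁X.trans hXR, hC₂X.trans hXR, hne⟩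

lemma LiftEq.one_lt_finrank_cycleSpace_iff (h : G.LiftEq H) (hR : R ⊆ G.E) :
    1 < Module.finrank (ZMod 2) (G.cycleSpace R) ↔
      1 < Module.finrank (ZMod 2) (H.cycleSpace R) := by
  have hRH : R ⊆ H.E := hR.trans h.1.subset
  rw [← twoCycles_iff_one_lt_finrank hR, ← twoCycles_iff_one_lt_finrank hRH,
    twoCycles_iff_exists_liftCircuit hR, twoCycles_iff_exists_liftCircuit hRH]
  simp only [h.2]

lemma LiftEq.spansHyperplane_coordFunctional_iff (h : G.LiftEq H) (J : Finset α) :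
    SpansHyperplane (ZMod 2) (coordFunctional (G.cycleSpace G.E)) J ↔
      SpansHyperplane (ZMod 2) (coordFunctional (H.cycleSpace H.E)) J := by
  classical
  rw [_root_.spansHyperplane_coordFunctional_iff, _root_.spansHyperplane_coordFunctional_iff,
    cycleSpace_inf_supported_compl, cycleSpace_inf_supported_compl, ← not_lt, ← not_lt, ← h.1,
    h.one_lt_finrank_cycleSpace_iff sdiff_subset]

lemma twoIso_of_cycleSpace_eq (hE : G.E = H.E) (h : G.cycleSpace G.E = H.cycleSpace H.E) :
    G.TwoIso H := by
  have heven : ∀ X ⊆ G.E, G.EvenSet X ↔ H.EvenSet X := fun X hX => by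
    have hiff := SetLike.ext_iff.1 h (charVec X)
    rwa [charVec_mem_cycleSpace_iff, charVec_mem_cycleSpace_iff, ← hE,
      and_congr_right_iff, imp_iff_right hX] at hiff
  refine ⟨hE, fun C => ?_⟩
  rw [isCycle_iff_minimal_evenSet, isCycle_iff_minimal_evenSet, ← hE]
  refine and_congr_right fun hC => ?_
  rw [minimal_iff_forall_lt, minimal_iff_forall_lt, heven C hC]
  exact and_congr_right fun _ => forall₂_congr fun X hX => by rw [heven X (hX.subset.trans hC)]

end LiftMatroid

section Cocycles

variable {V : Type} {α : Type} [DecidableEq V] {G : MGraph V α} {K : Finset α} {e f : α}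

lemma isCocycle_cycleSpace_iff :
    IsCocycle (G.cycleSpace G.E) K ↔ ∀ C, G.IsCycle C → ∑ e ∈ K, charVec C e = 0 := by
  refine ⟨fun h C hC => h _ (charVec_mem_cycleSpace_iff.2 ⟨hC.2.1, hC.evenSet⟩), fun h => ?_⟩
  have hle : G.cycleSpace G.E ≤
      LinearMap.ker (∑ e ∈ K, Finsupp.lapply (R := ZMod 2) (M := ZMod 2) e) := by
    rw [cycleSpace_eq_span_isCycle subset_rfl, Submodule.span_le]
    rintro _ ⟨C, ⟨-, hC⟩, rfl⟩
    simpa using h C hC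
  exact fun z hz => by simpa using hle hz

lemma isCocycle_singleton_iff_isCutEdge (he : e ∈ G.E) :
    IsCocycle (G.cycleSpace G.E) {e} ↔ G.IsCutEdge e := by
  classical
  rw [isCocycle_cycleSpace_iff, IsCutEdge, and_iff_right he]
  simp only [sum_singleton, charVec_apply, ite_eq_right_iff, one_ne_zero, imp_false]

lemma isCocycle_pair_iff_seriesPair [DecidableEq α] (he : e ∈ G.E) (hf : f ∈ G.E) (hef : e ≠ f) :
    IsCocycle (G.cycleSpace G.E) {e, f} ↔ G.SeriesPair e f := by
  rw [isCocycle_cycleSpace_iff, SeriesPair, and_iff_right he, and_iff_right hf]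
  refine forall₂_congr fun C _ => ?_
  rw [sum_pair hef, CharTwo.add_eq_zero, charVec_apply, charVec_apply]
  split_ifs <;> simp_all

end Cocycles

end MGraph

section CoordinateProjection

variable {α : Type*}

open scoped Classical in
/-- The projection that deletes the coordinates in `D`. On cycle spaces it is the effect of
contracting the edges in `D`. -/
noncomputable def restrictCompl (D : Finset α) : (α →₀ ZMod 2) →ₗ[ZMod 2] α →₀ ZMod 2 :=
  (Finsupp.supported (ZMod 2) (ZMod 2) (D : Set α)ᶜ).subtype ∘ₗ
    Finsupp.restrictDom (ZMod 2) (ZMod 2) (D : Set α)ᶜ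

lemma restrictCompl_apply [DecidableEq α] (D : Finset α) (z : α →₀ ZMod 2) (e : α) :
    restrictCompl D z e = if e ∈ D then 0 else z e := by
  simp [restrictCompl, Finsupp.filter_apply, ite_not]

lemma support_restrictCompl [DecidableEq α] (D : Finset α) (z : α →₀ ZMod 2) :
    (restrictCompl D z).support = z.support \ D := by
  ext e
  simp [restrictCompl_apply, and_comm]

end CoordinateProjection

namespace MGraph

section Contraction

variable {V : Type} {α : Type} {G : MGraph V α} {D K : Finset α}

/-- The graph `G / D` obtained from `G` by contracting the edges in `D`. -/
def contract [DecidableEq α] (G : MGraph V α) (D : Finset α) : MGraph (Quot (G.Adj D)) α :=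
  ⟨G.E \ D, fun e => (G.ends e).map (Quot.mk _)⟩

lemma contract_ends [DecidableEq α] (e : α) :
    (G.contract D).ends e = (G.ends e).map (Quot.mk (G.Adj D)) := rfl

lemma boundary_contract [DecidableEq α] (z : α →₀ ZMod 2) :
    (G.contract D).boundary z = (G.boundary z).mapDomain (Quot.mk (G.Adj D)) := by
  suffices h : (G.contract D).boundary =
      Finsupp.lmapDomain (ZMod 2) (ZMod 2) (Quot.mk (G.Adj D)) ∘ₗ G.boundary from
    LinearMap.congr_fun h z
  ext e : 2
  simp [boundary_single, contract_ends, endSum_map]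

lemma mem_map_boundary_of_mapDomain_eq_zero {b : V →₀ ZMod 2}
    (hb : b.mapDomain (Quot.mk (G.Adj D)) = 0) :
    b ∈ (Finsupp.supported (ZMod 2) (ZMod 2) (D : Set α)).map G.boundary := by
  set p := (Finsupp.supported (ZMod 2) (ZMod 2) (D : Set α)).map G.boundary
  have hsound : ∀ u v, G.Adj D u v →
      p.mkQ (Finsupp.single u 1) = p.mkQ (Finsupp.single v 1) := by
    rintro u v ⟨e, he, hends⟩
    rw [Submodule.mkQ_apply, Submodule.mkQ_apply, Submodule.Quotient.eq, ZModModule.sub_eq_add,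
      ← endSum_mk, ← hends, ← boundary_single]
    exact Submodule.mem_map_of_mem (Finsupp.single_mem_supported _ _ he)
  have hfactor : Finsupp.linearCombination (ZMod 2) (Quot.lift _ hsound) ∘ₗ
      Finsupp.lmapDomain (ZMod 2) (ZMod 2) (Quot.mk (G.Adj D)) = p.mkQ := by
    ext v
    simp
  rw [← p.ker_mkQ, ← hfactor, LinearMap.mem_ker, LinearMap.comp_apply, Finsupp.lmapDomain_apply,
    hb, map_zero]

variable [DecidableEq α]

lemma boundary_contract_restrictCompl (z : α →₀ ZMod 2) :
    (G.contract D).boundary (restrictCompl D z) = (G.contract D).boundary z := by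
  suffices h : (G.contract D).boundary ∘ₗ restrictCompl D = (G.contract D).boundary from
    LinearMap.congr_fun h z
  ext e : 2
  by_cases he : e ∈ D
  · have hloop : endSum ((G.contract D).ends e) = 0 := by
      induction hs : G.ends e with
      | h a b =>
        rw [contract_ends, hs, Sym2.map_mk, endSum_mk, Quot.sound ⟨e, he, hs⟩, ZModModule.add_self]
    have hzero : restrictCompl D (Finsupp.single e 1) = 0 := by
      ext f
      rw [restrictCompl_apply, Finsupp.single_apply, Finsupp.zero_apply]
      grind
    simp [boundary_single, hloop, hzero]
  · have hself : restrictCompl D (Finsupp.single e 1) = Finsupp.single e 1 := by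
      ext f
      rw [restrictCompl_apply, Finsupp.single_apply]
      grind
    simp [hself]

lemma cycleSpace_contract (hD : D ⊆ G.E) :
    (G.contract D).cycleSpace (G.contract D).E =
      (G.cycleSpace G.E).map (restrictCompl D) := by
  ext z
  rw [Submodule.mem_map, mem_cycleSpace_iff]
  constructor
  · rintro ⟨hzE, hz⟩
    rw [boundary_contract] at hz
    obtain ⟨d, hd, hdz⟩ := mem_map_boundary_of_mapDomain_eq_zero hz
    rw [SetLike.mem_coe, Finsupp.mem_supported, coe_subset] at hd
    refine ⟨z + d, mem_cycleSpace_iff.2 ⟨?_, ?_⟩, ?_⟩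
    · exact Finsupp.support_add.trans (union_subset (hzE.trans sdiff_subset) (hd.trans hD))
    · rw [map_add, hdz, ZModModule.add_self]
    · ext e
      rw [restrictCompl_apply, Finsupp.add_apply]
      split_ifs with he
      · exact (Finsupp.notMem_support_iff.1 fun h => (mem_sdiff.1 (hzE h)).2 he).symm
      · rw [Finsupp.notMem_support_iff.1 fun h => he (hd h), add_zero]
  · rintro ⟨y, hy, rfl⟩
    rw [mem_cycleSpace_iff] at hy
    rw [support_restrictCompl, boundary_contract_restrictCompl, boundary_contract, hy.2]
    exact ⟨sdiff_subset_sdiff hy.1 subset_rfl, Finsupp.mapDomain_zero⟩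

lemma isCocycle_of_isCocycle_contract (hD : D ⊆ G.E) (hK : K ⊆ (G.contract D).E)
    (h : IsCocycle ((G.contract D).cycleSpace (G.contract D).E) K) :
    IsCocycle (G.cycleSpace G.E) K := fun z hz => by
  rw [cycleSpace_contract hD] at h
  rw [← h _ (Submodule.mem_map_of_mem hz)]
  exact sum_congr rfl fun e he => by
    rw [restrictCompl_apply, if_neg (mem_sdiff.1 (hK he)).2]

lemma finrank_cycleSpace_contract_le (hD : D ⊆ G.E) :
    Module.finrank (ZMod 2) ((G.contract D).cycleSpace (G.contract D).E) ≤
      Module.finrank (ZMod 2) (G.cycleSpace G.E) := by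
  rw [cycleSpace_contract hD]
  exact Submodule.finrank_map_le _ _

lemma Connected.contract (h : G.Connected) : (G.contract D).Connected := by
  rintro ⟨u⟩ ⟨v⟩
  refine (h u v).lift' _ ?_
  rintro a b ⟨e, he, hends⟩
  by_cases heD : e ∈ D
  · rw [Function.onFun, Quot.sound ⟨e, heD, hends⟩]
  · exact .single ⟨e, mem_sdiff.2 ⟨he, heD⟩, by rw [contract_ends, hends, Sym2.map_mk]⟩

end Contraction

section Stars

variable {V : Type} {α : Type} [DecidableEq V] {G : MGraph V α} {z : α →₀ ZMod 2} {v : V}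

/-- The star of the vertex `v`: the set of non-loop edges of `G` at `v`. -/
def star (G : MGraph V α) (v : V) : Finset α :=
  {e ∈ G.E | v ∈ G.ends e ∧ ¬ (G.ends e).IsDiag}

lemma boundary_apply_eq_sum_star (hz : z.support ⊆ G.E) (v : V) :
    G.boundary z v = ∑ e ∈ G.star v, z e := by
  rw [boundary_apply, star, sum_filter, ← sum_subset hz fun e _ he => by
    rw [Finsupp.notMem_support_iff.1 he, ite_self]]
  exact sum_congr rfl fun e he => by rw [endSum_apply, apply_eq_one_of_mem_support he]

lemma isCocycle_star (v : V) : IsCocycle (G.cycleSpace G.E) (G.star v) := fun z hz => by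
  obtain ⟨hzE, hz⟩ := mem_cycleSpace_iff.1 hz
  rw [← boundary_apply_eq_sum_star hzE, hz, Finsupp.zero_apply]

lemma Connected.star_nonempty [Nontrivial V] (h : G.Connected) (v : V) : (G.star v).Nonempty := by
  by_contra hempty
  have hstuck : ∀ w, Relation.ReflTransGen (G.Adj G.E) v w → v = w := fun w hw => by
    induction hw with
    | refl => rfl
    | tail _ hab ih =>
      obtain ⟨e, he, hends⟩ := hab
      subst ih
      by_contra hne
      exact hempty ⟨e, mem_filter.2 ⟨he, by simp [hends], by simpa [hends] using hne⟩⟩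
  obtain ⟨w, hw⟩ := exists_ne v
  exact hw (hstuck w (h v w)).symm

variable [Fintype V]

lemma sum_card_star_le : ∑ v, #(G.star v) ≤ 2 * #G.E := by
  have hstar : ∀ v, #(G.star v) ≤ G.degIn G.E v := fun v => by
    rw [star, card_filter, degIn]
    exact sum_le_sum fun e _ => by split_ifs <;> simp_all
  exact (sum_le_sum fun v _ => hstar v).trans_eq (sum_degIn fun _ _ v _ => mem_univ v)

lemma two_lt_finrank_cycleSpace (hV : 3 ≤ Fintype.card V) (hG : ∀ v, 3 ≤ #(G.star v)) :
    2 < Module.finrank (ZMod 2) (G.cycleSpace G.E) := by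
  obtain ⟨v⟩ : Nonempty V := Fintype.card_pos_iff.1 (by omega)
  have hsum := card_nsmul_le_sum univ (fun u => #(G.star u)) 3 fun u _ => hG u
  have hedges := sum_card_star_le (G := G)
  have hrank := card_lt_card_add_finrank_cycleSpace (G := G) (X := G.E)
    (fun _ _ u _ => mem_univ u) ⟨v, mem_univ v⟩
  rw [card_univ] at hrank
  rw [card_univ, smul_eq_mul] at hsum
  omega

lemma card_star_lt_finrank_of_card_star_le (hV : 5 ≤ Fintype.card V) (hG : ∀ v, 3 ≤ #(G.star v))
    {w : V} (hvw : w ≠ v) (hle : #(G.star w) ≤ #(G.star v)) :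
    #(G.star w) < Module.finrank (ZMod 2) (G.cycleSpace G.E) := by
  have hrest := card_nsmul_le_sum (univ \ {v, w}) (fun u => #(G.star u)) 3 fun u _ => hG u
  have hsplit := sum_sdiff (f := fun u => #(G.star u)) (subset_univ {v, w})
  rw [sum_pair hvw.symm] at hsplit
  rw [card_sdiff_of_subset (subset_univ _), card_pair hvw.symm, card_univ, smul_eq_mul] at hrest
  have hedges := sum_card_star_le (G := G)
  have hrank := card_lt_card_add_finrank_cycleSpace (G := G) (X := G.E)
    (fun _ _ u _ => mem_univ u) ⟨v, mem_univ v⟩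
  rw [card_univ] at hrank
  omega

-- Only a largest star can be too large to be tested, and its condition is implied by the others.
lemma mem_cycleSpace_of_sum_star_eq_zero (hV : 5 ≤ Fintype.card V) (hG : ∀ v, 3 ≤ #(G.star v))
    (hzE : z.support ⊆ G.E)
    (hz : ∀ v, #(G.star v) < Module.finrank (ZMod 2) (G.cycleSpace G.E) →
      ∑ e ∈ G.star v, z e = 0) :
    z ∈ G.cycleSpace G.E := by
  have : Nonempty V := Fintype.card_pos_iff.1 (by omega)
  obtain ⟨v, hv⟩ := Finite.exists_max fun v => #(G.star v)
  refine mem_cycleSpace_iff.2 ⟨hzE, boundary_eq_zero_of_forall_ne (v := v) fun w hw => ?_⟩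
  rw [boundary_apply_eq_sum_star hzE]
  exact hz w (card_star_lt_finrank_of_card_star_le hV hG hw (hv w))

end Stars

section Cosimplification

variable {V : Type} {α : Type} [DecidableEq V] [DecidableEq α] {G : MGraph V α} {D K : Finset α}
  {z : α →₀ ZMod 2} {e : α}

lemma IsCoContractSet.existsUnique_seriesPair (hD : G.IsCoContractSet D) (he : e ∈ G.E)
    (hcut : ¬ G.IsCutEdge e) : ∃! f, f ∉ D ∧ G.SeriesPair e f := by
  classical
  have hself : G.SeriesPair e e := ⟨he, he, fun _ _ => Iff.rfl⟩
  have hmem : ∀ f, f ∈ {f ∈ G.E | G.SeriesPair e f} ↔ G.SeriesPair e f := fun f =>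
    mem_filter.trans (and_iff_right_of_imp fun h => h.2.1)
  have hclass : G.SeriesClass {f ∈ G.E | G.SeriesPair e f} := by
    refine ⟨filter_subset _ _, ⟨e, (hmem e).2 hself⟩, fun f hf g hg => ?_,
      fun g _ hg => (hmem g).2 (hg e ((hmem e).2 hself))⟩
    rw [hmem] at hf hg
    exact ⟨hf.2.1, hg.2.1, fun C hC => (hf.2.2 C hC).symm.trans (hg.2.2 C hC)⟩
  obtain ⟨f, hf⟩ := card_eq_one.1 (hD.2.2 _ hclass ⟨e, (hmem e).2 hself, hcut⟩)
  have hiff : ∀ g, g ∉ D ∧ G.SeriesPair e g ↔ g = f := fun g => by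
    rw [← mem_singleton, ← hf, mem_sdiff, hmem, and_comm]
  exact ⟨f, (hiff f).2 rfl, fun g => (hiff g).1⟩

lemma IsCoContractSet.three_le_card (hD : G.IsCoContractSet D) (hne : K.Nonempty)
    (hKD : K ⊆ G.E \ D) (hK : IsCocycle (G.cycleSpace G.E) K) : 3 ≤ #K := by
  have hE : ∀ e ∈ K, e ∈ G.E := fun e he => (mem_sdiff.1 (hKD he)).1
  have hnotMem : ∀ e ∈ K, e ∉ D := fun e he => (mem_sdiff.1 (hKD he)).2
  have hcut : ∀ e ∈ K, ¬ G.IsCutEdge e := fun e he h => hnotMem e he (hD.2.1 e h)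
  by_contra! hlt
  have hpos := hne.card_pos
  obtain h1 | h2 : #K = 1 ∨ #K = 2 := by omega
  · obtain ⟨e, rfl⟩ := card_eq_one.1 h1
    have he := mem_singleton_self e
    exact hcut e he ((isCocycle_singleton_iff_isCutEdge (hE e he)).1 hK)
  · obtain ⟨e, f, hef, rfl⟩ := card_eq_two.1 h2
    have he := mem_insert_self e {f}
    have hf := mem_insert_of_mem (b := e) (mem_singleton_self f)
    refine hef ((hD.existsUnique_seriesPair (hE e he) (hcut e he)).unique
      ⟨hnotMem e he, hE e he, hE e he, fun _ _ => Iff.rfl⟩ ⟨hnotMem f hf, ?_⟩)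
    exact (isCocycle_pair_iff_seriesPair (hE e he) (hE f hf) hef).1 hK

lemma IsCoContractSet.eq_zero_of_sum_eq_zero (hD : G.IsCoContractSet D) (hzD : z.support ⊆ D)
    (hz : ∀ K, IsCocycle (G.cycleSpace G.E) K → #K ≤ 2 → ∑ e ∈ K, z e = 0) : z = 0 := by
  have hoff : ∀ e ∉ D, z e = 0 := fun e he => Finsupp.notMem_support_iff.1 fun h => he (hzD h)
  ext e
  by_cases heD : e ∈ D
  · have heE := hD.1 heD
    by_cases hcut : G.IsCutEdge e
    · have hsum := hz _ ((isCocycle_singleton_iff_isCutEdge heE).2 hcut) (by simp)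
      rwa [sum_singleton] at hsum
    · obtain ⟨f, ⟨hfD, hef⟩, -⟩ := hD.existsUnique_seriesPair heE hcut
      have hne : e ≠ f := ne_of_mem_of_not_mem heD hfD
      have hsum := hz _ ((isCocycle_pair_iff_seriesPair heE hef.2.1 hne).2 hef) card_le_two
      rwa [sum_pair hne, hoff f hfD, add_zero] at hsum
  · exact hoff e heD

lemma IsCoContractSet.three_le_card_star_contract [DecidableEq (Quot (G.Adj D))]
    [Nontrivial (Quot (G.Adj D))] (hD : G.IsCoContractSet D) (hG : G.Connected)
    (q : Quot (G.Adj D)) : 3 ≤ #((G.contract D).star q) :=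
  hD.three_le_card (hG.contract.star_nonempty q) (filter_subset _ _)
    (isCocycle_of_isCocycle_contract hD.1 (filter_subset _ _) (isCocycle_star q))

lemma IsCoContractSet.two_lt_finrank_cycleSpace (hD : G.IsCoContractSet D) (hG : G.Connected)
    (hn : 3 ≤ Nat.card (Quot (G.Adj D))) :
    2 < Module.finrank (ZMod 2) (G.cycleSpace G.E) := by
  classical
  have : Finite (Quot (G.Adj D)) := Nat.finite_of_card_ne_zero (by omega)
  have := Fintype.ofFinite (Quot (G.Adj D))
  rw [Nat.card_eq_fintype_card] at hn
  have : Nontrivial (Quot (G.Adj D)) := Fintype.one_lt_card_iff_nontrivial.1 (by omega)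
  exact (MGraph.two_lt_finrank_cycleSpace hn (hD.three_le_card_star_contract hG)).trans_le
    (finrank_cycleSpace_contract_le hD.1)

lemma IsCoContractSet.restrictCompl_mem_cycleSpace_contract (hD : G.IsCoContractSet D)
    (hG : G.Connected) (hn : 5 ≤ Nat.card (Quot (G.Adj D))) (hzE : z.support ⊆ G.E)
    (hz : ∀ K, IsCocycle (G.cycleSpace G.E) K →
      #K < Module.finrank (ZMod 2) (G.cycleSpace G.E) → ∑ e ∈ K, z e = 0) :
    restrictCompl D z ∈ (G.contract D).cycleSpace (G.contract D).E := by
  classical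
  have : Finite (Quot (G.Adj D)) := Nat.finite_of_card_ne_zero (by omega)
  have := Fintype.ofFinite (Quot (G.Adj D))
  rw [Nat.card_eq_fintype_card] at hn
  have : Nontrivial (Quot (G.Adj D)) := Fintype.one_lt_card_iff_nontrivial.1 (by omega)
  refine mem_cycleSpace_of_sum_star_eq_zero hn (hD.three_le_card_star_contract hG) ?_ fun q hq => ?_
  · rw [support_restrictCompl]
    exact sdiff_subset_sdiff hzE subset_rfl
  · have hsub : (G.contract D).star q ⊆ G.E \ D := filter_subset _ _
    rw [← hz _ (isCocycle_of_isCocycle_contract hD.1 hsub (isCocycle_star q))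
      (hq.trans_le (finrank_cycleSpace_contract_le hD.1))]
    exact sum_congr rfl fun e he => by rw [restrictCompl_apply, if_neg (mem_sdiff.1 (hsub he)).2]

-- The cocycles with at most two edges determine the coordinates in `D`.
lemma IsCoContractSet.mem_cycleSpace_of_sum_eq_zero (hD : G.IsCoContractSet D) (hG : G.Connected)
    (hn : 5 ≤ Nat.card (Quot (G.Adj D))) (hzE : z.support ⊆ G.E)
    (hz : ∀ K, IsCocycle (G.cycleSpace G.E) K →
      #K < Module.finrank (ZMod 2) (G.cycleSpace G.E) → ∑ e ∈ K, z e = 0) :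
    z ∈ G.cycleSpace G.E := by
  have hrank := hD.two_lt_finrank_cycleSpace hG (by omega)
  have hmem := hD.restrictCompl_mem_cycleSpace_contract hG hn hzE hz
  rw [cycleSpace_contract hD.1] at hmem
  obtain ⟨y, hy, hyz⟩ := hmem
  suffices hzy : z - y = 0 by rwa [sub_eq_zero.1 hzy]
  refine hD.eq_zero_of_sum_eq_zero ?_ fun K hK hcard => ?_
  · rw [← sdiff_eq_empty_iff_subset, ← support_restrictCompl, map_sub, hyz, sub_self,
      Finsupp.support_zero]
  · simp only [Finsupp.sub_apply]
    rw [sum_sub_distrib, hK y hy, hz K hK (by omega), sub_zero]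

end Cosimplification

end MGraph

theorem twoIso_of_co_five_vertices_general
    {V₁ V₂ α : Type} [DecidableEq V₁] [DecidableEq V₂] [DecidableEq α]
    (G₁ : MGraph V₁ α) (G₂ : MGraph V₂ α) (hc₁ : G₁.Connected) (hL : G₁.LiftEq G₂)
    (hco : ∃ D : Finset α, G₁.IsCoContractSet D ∧ 5 ≤ Nat.card (Quot (G₁.Adj D))) :
    G₁.TwoIso G₂ := by
  obtain ⟨D, hD, hn⟩ := hco
  have hspan := hL.spansHyperplane_coordFunctional_iff
  have hr₁ : 1 < Module.finrank (ZMod 2) (G₁.cycleSpace G₁.E) :=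
    one_lt_two.trans (hD.two_lt_finrank_cycleSpace hc₁ (by omega))
  have hr₂ : 1 < Module.finrank (ZMod 2) (G₂.cycleSpace G₂.E) :=
    hL.1 ▸ (hL.one_lt_finrank_cycleSpace_iff subset_rfl).1 hr₁
  have hr := finrank_eq_of_spansHyperplane_coordFunctional_iff hspan hr₁ hr₂
  have hle : G₂.cycleSpace G₂.E ≤ G₁.cycleSpace G₁.E := fun z hz =>
    hD.mem_cycleSpace_of_sum_eq_zero hc₁ hn
      ((MGraph.mem_cycleSpace_iff.1 hz).1.trans hL.1.symm.subset) fun K hK hcard =>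
        hK.of_spansHyperplane_coordFunctional_iff hspan hr hr₁ hcard z hz
  exact MGraph.twoIso_of_cycleSpace_eq hL.1 (Submodule.eq_of_le_of_finrank_eq hle hr.symm).symm

/-- connected graphs with `L(G₁) = L(G₂)`, at least two circuits,
and `|V(co(G₁))| ≥ 5` are 2-isomorphic. -/
theorem twoIso_of_co_five_vertices
    {V₁ V₂ α : Type} [DecidableEq V₁] [DecidableEq V₂] [DecidableEq α]
    (G₁ : MGraph V₁ α) (G₂ : MGraph V₂ α)
    (hc₁ : G₁.Connected) (hc₂ : G₂.Connected)
    (hL : G₁.LiftEq G₂) (h2 : G₁.TwoLiftCircuits)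
    (hco : ∃ D : Finset α, G₁.IsCoContractSet D ∧ 5 ≤ Nat.card (Quot (G₁.Adj D))) :
    G₁.TwoIso G₂ := by
  exact twoIso_of_co_five_vertices_general G₁ G₂ hc₁ hL hco
end

section
/- The converse of the previous implication fails: there exist graphs G1 and G2 on the same edge set with L(G1) = L(G2) but M(G1) ≠ M(G2). Concretely, two different labelings of K_4 on the same 6-element edge set give equal bicircular lift matroids (both isomorphic to the uniform-like matroid whose circuits are all 4-edge subsets forming two cycles or theta subgraphs of K_4) while their graphic matroids differ. -/
open Finset

/-- `G` is a labelling of `K₄` on the edge set `Fin 6`: all six edges are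
present, loopless, with pairwise distinct endpoint pairs (hence all six vertex
pairs occur). -/
def IsLabelledK4 (G : MGraph (Fin 4) (Fin 6)) : Prop :=
  G.E = Finset.univ ∧ (∀ e : Fin 6, ¬ (G.ends e).IsDiag) ∧ Function.Injective G.ends

/-!
Every labelling of `K₄` has the same bicircular lift matroid: its circuits are the 5-element sets.

* Two distinct cycles span at least five edges. Their symmetric difference is a nonempty even edge
  set, and in a simple graph a nonempty even edge set has at least three edges; so
  `2 * #(C₁ ∪ C₂) = #C₁ + #C₂ + #(C₁ ∆ C₂) ≥ 9`.
* Any five edges contain two cycles, namely the triangles opposite to the two ends of the missing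
  edge.

Exchanging the labels of two adjacent edges changes the triangles, hence the graphic matroid.
-/

open scoped symmDiff

theorem sum_symmDiff_add_two_nsmul_sum_inter {ι M : Type*} [DecidableEq ι] [AddCommMonoid M]
    (s t : Finset ι) (f : ι → M) :
    ∑ i ∈ s ∆ t, f i + 2 • ∑ i ∈ s ∩ t, f i = ∑ i ∈ s, f i + ∑ i ∈ t, f i := by
  have hunion : ∑ i ∈ s ∆ t, f i + ∑ i ∈ s ∩ t, f i = ∑ i ∈ s ∪ t, f i := by
    have hdisj : Disjoint (s ∆ t) (s ∩ t) := disjoint_symmDiff_inf s t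
    have hunion_eq : s ∆ t ∪ s ∩ t = s ∪ t := symmDiff_sup_inf s t
    rw [← hunion_eq, sum_union hdisj]
  rw [two_nsmul, ← add_assoc, hunion, sum_union_inter]

namespace MGraph

variable {V α : Type} [DecidableEq V] {G : MGraph V α}

/-- A graph is simple if it has neither loops nor parallel edges. -/
structure IsSimple (G : MGraph V α) : Prop where
  loopless : G.Loopless
  injOn_ends : Set.InjOn G.ends G.E

/-- An edge set is even if every vertex has even degree in it; the even subsets of `G.E` form the
binary cycle space of `G`. Containment in `G.E` is not part of the definition. -/
def IsEven (G : MGraph V α) (X : Finset α) : Prop :=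
  ∀ v, Even (G.degIn X v)

theorem degIn_eq_zero_of_not_vIn {X : Finset α} {v : V} (hv : ¬ G.VIn X v) : G.degIn X v = 0 := by
  refine sum_eq_zero fun e he => ?_
  have hve : v ∉ G.ends e := fun hve => hv ⟨e, he, hve⟩
  have hloop : G.ends e ≠ s(v, v) := fun h => hve (h ▸ Sym2.mem_mk_left v v)
  rw [if_neg hloop, if_neg hve]

theorem Loopless.degIn_eq_card_filter (hG : G.Loopless) {X : Finset α} (hX : X ⊆ G.E) (v : V) :
    G.degIn X v = #{e ∈ X | v ∈ G.ends e} := by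
  rw [card_filter]
  refine sum_congr rfl fun e he => if_neg fun h => hG e (hX he) ?_
  rw [h]
  exact Sym2.mk_isDiag_iff.2 rfl

theorem IsCycle.isEven {C : Finset α} (hC : G.IsCycle C) : G.IsEven C := by
  intro v
  by_cases hv : G.VIn C v
  · rw [hC.2.2.1 v hv]
    exact even_two
  · rw [degIn_eq_zero_of_not_vIn hv]
    exact Even.zero

theorem IsEven.symmDiff [DecidableEq α] {X Y : Finset α} (hX : G.IsEven X) (hY : G.IsEven Y) :
    G.IsEven (X ∆ Y) := by
  intro v
  have hsum : Even (G.degIn (X ∆ Y) v + 2 • G.degIn (X ∩ Y) v) := by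
    unfold degIn
    rw [sum_symmDiff_add_two_nsmul_sum_inter]
    exact (hX v).add (hY v)
  exact (Nat.even_add.1 hsum).2 (even_two_mul _)

theorem IsEven.exists_ne_mem_ends {X : Finset α} (heven : G.IsEven X) (hG : G.Loopless)
    (hX : X ⊆ G.E) {e : α} (he : e ∈ X) {v : V} (hv : v ∈ G.ends e) :
    ∃ f ∈ X, f ≠ e ∧ v ∈ G.ends f := by
  have hpos : 0 < #{f ∈ X | v ∈ G.ends f} := card_pos.2 ⟨e, mem_filter.2 ⟨he, hv⟩⟩
  have hcard : Even #{f ∈ X | v ∈ G.ends f} := hG.degIn_eq_card_filter hX v ▸ heven v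
  have hone_lt : 1 < #{f ∈ X | v ∈ G.ends f} := by grind
  obtain ⟨f, hf, hfe⟩ := exists_mem_ne hone_lt e
  exact ⟨f, (mem_filter.1 hf).1, hfe, (mem_filter.1 hf).2⟩

theorem IsEven.three_le_card {X : Finset α} (heven : G.IsEven X) (hG : G.IsSimple)
    (hX : X ⊆ G.E) (hne : X.Nonempty) : 3 ≤ #X := by
  obtain ⟨e, he⟩ := hne
  obtain ⟨u, v, huv⟩ : ∃ u v, G.ends e = s(u, v) := (G.ends e).ind fun u v => ⟨u, v, rfl⟩
  have hu_ne_v : u ≠ v := by simpa [huv] using hG.loopless e (hX he)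
  obtain ⟨f, hf, hfe, huf⟩ :=
    heven.exists_ne_mem_ends hG.loopless hX he (huv ▸ Sym2.mem_mk_left u v)
  obtain ⟨g, hg, hge, hvg⟩ :=
    heven.exists_ne_mem_ends hG.loopless hX he (huv ▸ Sym2.mem_mk_right u v)
  have hfg : f ≠ g := by
    rintro rfl
    have hends : G.ends f = G.ends e := huv ▸ (Sym2.mem_and_mem_iff hu_ne_v).1 ⟨huf, hvg⟩
    exact hfe (hG.injOn_ends (hX hf) (hX he) hends)
  exact two_lt_card.2 ⟨e, he, f, hf, g, hg, hfe.symm, hge.symm, hfg⟩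

theorem IsSimple.five_le_card_union [DecidableEq α] (hG : G.IsSimple) {C₁ C₂ : Finset α}
    (h₁ : G.IsCycle C₁) (h₂ : G.IsCycle C₂) (hne : C₁ ≠ C₂) : 5 ≤ #(C₁ ∪ C₂) := by
  have hC₁ : 3 ≤ #C₁ := h₁.isEven.three_le_card hG h₁.2.1 h₁.1
  have hC₂ : 3 ≤ #C₂ := h₂.isEven.three_le_card hG h₂.2.1 h₂.1
  have hsub : C₁ ∆ C₂ ⊆ G.E := symmDiff_le_sup.trans (union_subset h₁.2.1 h₂.2.1)
  have hdiff : 3 ≤ #(C₁ ∆ C₂) :=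
    (h₁.isEven.symmDiff h₂.isEven).three_le_card hG hsub (symmDiff_nonempty.2 hne)
  have hsum : #(C₁ ∆ C₂) + 2 * #(C₁ ∩ C₂) = #C₁ + #C₂ := by
    simpa using sum_symmDiff_add_two_nsmul_sum_inter C₁ C₂ fun _ => (1 : ℕ)
  have hunion := card_union_add_card_inter C₁ C₂
  omega

theorem isCycle_triangle [DecidableEq α] {u v w : V} (huv : u ≠ v) (hvw : v ≠ w) (huw : u ≠ w)
    {e f g : α} (he : G.ends e = s(u, v)) (hf : G.ends f = s(v, w)) (hg : G.ends g = s(u, w))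
    (hE : {e, f, g} ⊆ G.E) : G.IsCycle {e, f, g} := by
  have hef : e ≠ f := by rintro rfl; exact huw (by grind)
  have hfg : f ≠ g := by rintro rfl; exact huv (by grind)
  have heg : e ≠ g := by rintro rfl; exact hvw (by grind)
  have hVIn : ∀ x, G.VIn {e, f, g} x → x = u ∨ x = v ∨ x = w := by
    rintro x ⟨i, hi, hx⟩
    simp only [mem_insert, mem_singleton] at hi
    rcases hi with rfl | rfl | rfl <;> grind
  refine ⟨insert_nonempty _ _, hE, fun x hx => ?_, fun x y hx hy => ?_⟩
  · rcases hVIn x hx with rfl | rfl | rfl <;>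
      simp [degIn, hef, heg, hfg, he, hf, hg, huv, hvw, huw, huv.symm, hvw.symm, huw.symm]
  · rcases eq_or_ne x y with rfl | hxy
    · exact .refl
    · refine .single ?_
      rcases hVIn x hx with rfl | rfl | rfl <;> rcases hVIn y hy with rfl | rfl | rfl <;>
        simp_all [Adj, Sym2.eq_swap]

theorem liftCircuit_iff_card_eq [DecidableEq α] {n : ℕ}
    (hunion : ∀ C₁ C₂, G.IsCycle C₁ → G.IsCycle C₂ → C₁ ≠ C₂ → n ≤ #(C₁ ∪ C₂))
    (htwo : ∀ X ⊆ G.E, #X = n → G.TwoCycles X) (X : Finset α) :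
    G.LiftCircuit X ↔ X ⊆ G.E ∧ #X = n := by
  have hle : ∀ Y, G.TwoCycles Y → n ≤ #Y := by
    rintro Y ⟨C₁, C₂, h₁, h₂, h₁Y, h₂Y, hne⟩
    exact (hunion C₁ C₂ h₁ h₂ hne).trans (card_le_card (union_subset h₁Y h₂Y))
  constructor
  · rintro ⟨hXE, hX, hmin⟩
    obtain ⟨Y, hYX, hY⟩ := exists_subset_card_eq (hle X hX)
    have hYX_eq : Y = X := by
      by_contra hne
      exact hmin Y (hYX.ssubset_of_ne hne) (htwo Y (hYX.trans hXE) hY)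
    exact ⟨hXE, hYX_eq ▸ hY⟩
  · rintro ⟨hXE, hX⟩
    exact ⟨hXE, htwo X hXE hX, fun Y hYX hY => (hX ▸ card_lt_card hYX).not_ge (hle Y hY)⟩

end MGraph

namespace IsLabelledK4

variable {G G₁ G₂ : MGraph (Fin 4) (Fin 6)}

theorem mem_edges (hG : IsLabelledK4 G) (e : Fin 6) : e ∈ G.E :=
  hG.1 ▸ mem_univ e

theorem isSimple (hG : IsLabelledK4 G) : G.IsSimple :=
  ⟨fun e _ => hG.2.1 e, hG.2.2.injOn⟩

theorem exists_ends_eq (hG : IsLabelledK4 G) {u v : Fin 4} (huv : u ≠ v) :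
    ∃ e, G.ends e = s(u, v) := by
  let toLink (e : Fin 6) : {z : Sym2 (Fin 4) // ¬ z.IsDiag} := ⟨G.ends e, hG.2.1 e⟩
  have hinj : Function.Injective toLink := fun _ _ h => hG.2.2 (congrArg Subtype.val h)
  have hcard : Fintype.card (Fin 6) = Fintype.card {z : Sym2 (Fin 4) // ¬ z.IsDiag} := by
    rw [Sym2.card_subtype_not_diag, Fintype.card_fin, Fintype.card_fin]
    rfl
  have hsurj := ((Fintype.bijective_iff_injective_and_card _).2 ⟨hinj, hcard⟩).surjective
  obtain ⟨e, he⟩ := hsurj ⟨s(u, v), fun h => huv (Sym2.mk_isDiag_iff.1 h)⟩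
  exact ⟨e, congrArg Subtype.val he⟩

theorem isCycle_filter_notMem_ends (hG : IsLabelledK4 G) (x : Fin 4) :
    G.IsCycle {e | x ∉ G.ends e} := by
  have hothers : ∀ x : Fin 4, ∃ u v w, u ≠ v ∧ v ≠ w ∧ u ≠ w ∧ ∀ z : Sym2 (Fin 4), ¬ z.IsDiag →
      (x ∉ z ↔ z = s(u, v) ∨ z = s(v, w) ∨ z = s(u, w)) := by decide
  obtain ⟨u, v, w, huv, hvw, huw, hx⟩ := hothers x
  obtain ⟨e, he⟩ := hG.exists_ends_eq huv
  obtain ⟨f, hf⟩ := hG.exists_ends_eq hvw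
  obtain ⟨g, hg⟩ := hG.exists_ends_eq huw
  have htriangle : ({e | x ∉ G.ends e} : Finset (Fin 6)) = {e, f, g} := by
    ext i
    simp only [mem_filter_univ, mem_insert, mem_singleton, hx _ (hG.2.1 i), ← he, ← hf, ← hg,
      hG.2.2.eq_iff]
  rw [htriangle]
  exact MGraph.isCycle_triangle huv hvw huw he hf hg fun i _ => hG.mem_edges i

theorem twoCycles_of_card_eq_five (hG : IsLabelledK4 G) {X : Finset (Fin 6)} (hX : #X = 5) :
    G.TwoCycles X := by
  obtain ⟨e, rfl⟩ : ∃ e, X = {e}ᶜ := by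
    obtain ⟨e, he⟩ := card_eq_one.1 (show #Xᶜ = 1 by rw [card_compl, hX, Fintype.card_fin])
    exact ⟨e, he ▸ (compl_compl X).symm⟩
  obtain ⟨a, b, hab⟩ : ∃ a b, G.ends e = s(a, b) := (G.ends e).ind fun a b => ⟨a, b, rfl⟩
  have ha_ne_b : a ≠ b := by simpa [hab] using hG.2.1 e
  have hsub : ∀ x ∈ G.ends e, ({i | x ∉ G.ends i} : Finset (Fin 6)) ⊆ {e}ᶜ := by
    intro x hx i hi
    rw [mem_compl, mem_singleton]
    rintro rfl
    exact (mem_filter_univ _).1 hi hx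
  refine ⟨_, _, hG.isCycle_filter_notMem_ends a, hG.isCycle_filter_notMem_ends b,
    hsub a (hab ▸ Sym2.mem_mk_left a b), hsub b (hab ▸ Sym2.mem_mk_right a b), fun heq => ?_⟩
  have hthird : ∀ a b : Fin 4, ∃ c, a ≠ c ∧ b ≠ c := by decide
  obtain ⟨c, hac, hbc⟩ := hthird a b
  obtain ⟨f, hf⟩ := hG.exists_ends_eq hac
  have hf_iff : a ∉ G.ends f ↔ b ∉ G.ends f := by simpa using Finset.ext_iff.1 heq f
  simp [hf, ha_ne_b.symm, hbc] at hf_iff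

theorem liftCircuit_iff_card_eq_five (hG : IsLabelledK4 G) (X : Finset (Fin 6)) :
    G.LiftCircuit X ↔ #X = 5 := by
  rw [MGraph.liftCircuit_iff_card_eq (fun _ _ => hG.isSimple.five_le_card_union)
    (fun _ _ => hG.twoCycles_of_card_eq_five)]
  exact and_iff_right fun e _ => hG.mem_edges e

theorem liftEq (h₁ : IsLabelledK4 G₁) (h₂ : IsLabelledK4 G₂) : G₁.LiftEq G₂ :=
  ⟨h₁.1.trans h₂.1.symm, fun X =>
    (h₁.liftCircuit_iff_card_eq_five X).trans (h₂.liftCircuit_iff_card_eq_five X).symm⟩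

end IsLabelledK4

/-- The labelling of `K₄` by the lexicographic order of its edges. -/
def lexK4 : MGraph (Fin 4) (Fin 6) :=
  ⟨univ, ![s(0, 1), s(0, 2), s(0, 3), s(1, 2), s(1, 3), s(2, 3)]⟩

/-- The labelling of `K₄` obtained from `lexK4` by exchanging the labels of the adjacent edges
`s(0, 1)` and `s(0, 2)`. -/
def swapK4 : MGraph (Fin 4) (Fin 6) :=
  ⟨univ, lexK4.ends ∘ Equiv.swap 0 1⟩

theorem isLabelledK4_lexK4 : IsLabelledK4 lexK4 :=
  ⟨rfl, by decide, by decide⟩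

theorem isLabelledK4_swapK4 : IsLabelledK4 swapK4 :=
  ⟨rfl, by decide, isLabelledK4_lexK4.2.2.comp (Equiv.swap 0 1).injective⟩

theorem isCycle_lexK4 : lexK4.IsCycle {0, 4, 2} :=
  MGraph.isCycle_triangle (u := 0) (v := 1) (w := 3) (by decide) (by decide) (by decide)
    rfl rfl rfl (subset_univ _)

theorem not_isCycle_swapK4 : ¬ swapK4.IsCycle {0, 4, 2} := by
  intro hC
  have hVIn : swapK4.VIn {0, 4, 2} 2 := ⟨0, by decide, by decide⟩
  have hdeg : swapK4.degIn {0, 4, 2} 2 = 1 := by unfold MGraph.degIn; decide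
  exact absurd (hC.2.2.1 2 hVIn) (by rw [hdeg]; decide)

/-- there are two labelings of `K₄` on the same 6-element edge set
with equal bicircular lift matroids but different graphic matroids. -/
theorem liftEq_not_imp_twoIso :
    ∃ G₁ G₂ : MGraph (Fin 4) (Fin 6),
      IsLabelledK4 G₁ ∧ IsLabelledK4 G₂ ∧ G₁.LiftEq G₂ ∧ ¬ G₁.TwoIso G₂ :=
  ⟨lexK4, swapK4, isLabelledK4_lexK4, isLabelledK4_swapK4,
    isLabelledK4_lexK4.liftEq isLabelledK4_swapK4,
    fun h => not_isCycle_swapK4 ((h.2 _).1 isCycle_lexK4)⟩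
end
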